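/- arXiv:2202.07363 — 2 statements merged into one kernel-verified Lean document; each statement's English description precedes it below -/
import Mathlib

section
/- Let α ∈ (0,1) and set γ_α = 1/(2·Γ(α)·sin(π·(1−α)/2)). Then K_α is Lebesgue integrable on (−π, π), and there exists an even function g : (−π, π) → ℝ which is infinitely differentiable on (−π, π) such that K_α(x) = γ_α·|x|^(α−1) + g(x) for every x ∈ (−π, π) with x ≠ 0. -/
open Real MeasureTheory Set Filter Topology

/-- The periodic convolution kernel `K_α`: equal to the explicit integral
representation for `x ∉ 2πℤ` and to `0` on `2πℤ`. -/
noncomputable def Kker (α x : ℝ) : ℝ :=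
  letI : Decidable (∃ k : ℤ, x = 2 * π * k) := Classical.propDecidable _
  if ∃ k : ℤ, x = 2 * π * k then 0
  else (1 / (π * Real.Gamma α)) *
    ∫ t in Set.Ioi (0:ℝ),
      t ^ (α - 1) * (Real.exp t * Real.cos x - 1) /
        (1 - 2 * Real.exp t * Real.cos x + Real.exp (2 * t))

/-- The analytic remainder of `1/(exp z - 1)` after removing the pole at `0`. -/
noncomputable def hK : ℂ → ℂ := dslope (fun z => (dslope Complex.exp 0 z)⁻¹) 0

/-- The strip. -/
def SK : Set ℂ := {z | |z.im| < 2 * π}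

lemma SK_open : IsOpen SK := by
  have : Continuous fun z : ℂ => |z.im| := by fun_prop
  exact isOpen_lt this continuous_const

lemma exp_ne_one_SK {z : ℂ} (hz : z ∈ SK) (h0 : z ≠ 0) : Complex.exp z - 1 ≠ 0 := by
  intro h
  obtain ⟨n, hn⟩ := Complex.exp_eq_one_iff.1 (sub_eq_zero.1 h)
  have him : z.im = n * (2 * π) := by rw [hn]; simp
  have h1 : |z.im| < 2 * π := hz
  rw [him, abs_mul, abs_of_pos (by positivity : 0 < 2 * π)] at h1
  have h2 : |(n:ℝ)| < 1 := by
    have := Real.pi_pos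
    nlinarith
  have h3 : n = 0 := by
    have : |n| < 1 := by exact_mod_cast h2
    exact Int.abs_lt_one_iff.1 this
  apply h0; rw [hn, h3]; simp

lemma dslope_exp_ne {z : ℂ} (hz : z ∈ SK) : dslope Complex.exp 0 z ≠ 0 := by
  by_cases h0 : z = 0
  · subst h0; simp [dslope_same]
  · rw [dslope_of_ne _ h0, slope_def_field]
    simp only [Complex.exp_zero, sub_zero]
    exact div_ne_zero (exp_ne_one_SK hz h0) h0

lemma zero_mem_SK : (0:ℂ) ∈ SK := by
  simp [SK, Real.pi_pos]

lemma hK_diff : DifferentiableOn ℂ hK SK := by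
  have h0 : SK ∈ 𝓝 (0:ℂ) := SK_open.mem_nhds zero_mem_SK
  refine (Complex.differentiableOn_dslope h0).2 ?_
  refine DifferentiableOn.inv ?_ fun z hz => dslope_exp_ne hz
  exact (Complex.differentiableOn_dslope h0).2 Complex.differentiable_exp.differentiableOn

lemma hK_eq {z : ℂ} (hz : z ∈ SK) (h0 : z ≠ 0) : hK z = 1 / (Complex.exp z - 1) - 1 / z := by
  have := exp_ne_one_SK hz h0
  rw [hK, dslope_of_ne _ h0, slope_def_field, dslope_of_ne _ h0, slope_def_field, dslope_same]
  simp only [Complex.exp_zero, sub_zero, Complex.deriv_exp]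
  field_simp

lemma hK_bound : ∃ M : ℝ, 0 < M ∧ ∀ z : ℂ, -1 ≤ z.re → |z.im| ≤ 5 → ‖hK z‖ ≤ M / (z.re + 2) := by
  have hsub : ∀ z : ℂ, |z.im| ≤ 5 → z ∈ SK := fun z hz => by
    have := Real.pi_gt_three
    show |z.im| < 2 * π
    linarith
  have hcpt : IsCompact (Icc (-1:ℝ) 1 ×ℂ Icc (-5:ℝ) 5) := isCompact_Icc.reProdIm isCompact_Icc
  obtain ⟨C, hC⟩ := hcpt.exists_bound_of_continuousOn (f := hK)
    (hK_diff.continuousOn.mono fun z hz => hsub z (abs_le.2 (Complex.mem_reProdIm.1 hz).2))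
  refine ⟨max (3 * C) 6, by positivity, fun z hre him => ?_⟩
  rw [le_div_iff₀ (by linarith)]
  by_cases h : z.re ≤ 1
  · have h1 := hC z (Complex.mem_reProdIm.2 ⟨⟨hre, h⟩, abs_le.1 him⟩)
    have h2 := norm_nonneg (hK z)
    have h3 := le_max_left (3 * C) 6
    nlinarith
  · push Not at h
    have hz0 : z ≠ 0 := by rintro rfl; simp at h; linarith
    have hpos : 0 < z.re := by linarith
    have e1 : z.re ≤ ‖Complex.exp z - 1‖ := by
      have := norm_sub_norm_le (Complex.exp z) 1
      rw [Complex.norm_exp, norm_one] at this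
      linarith [Real.add_one_le_exp z.re]
    have e2 : z.re ≤ ‖z‖ := Complex.re_le_norm z
    have h1 : ‖hK z‖ ≤ 1 / z.re + 1 / z.re := by
      rw [hK_eq (hsub z him) hz0]
      refine (norm_sub_le _ _).trans ?_
      rw [norm_div, norm_div, norm_one]
      gcongr
    have h3 := le_max_right (3 * C) 6
    calc ‖hK z‖ * (z.re + 2) ≤ (1 / z.re + 1 / z.re) * (z.re + 2) := by gcongr
      _ ≤ 6 := by
        rw [← add_div, div_mul_eq_mul_div, div_le_iff₀ hpos]; linarith
      _ ≤ _ := h3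

lemma hK_deriv_bound : ∃ M : ℝ, 0 < M ∧ ∀ z : ℂ, -1/2 ≤ z.re → |z.im| ≤ 4 →
    ‖hK z‖ ≤ M / (z.re + 1) ∧ ‖deriv hK z‖ ≤ M / (z.re + 1) := by
  obtain ⟨M, hM, hb⟩ := hK_bound
  refine ⟨4 * M, by positivity, fun z hre him => ⟨?_, ?_⟩⟩
  · refine (hb z (by linarith) (by linarith)).trans ?_
    gcongr
    · linarith
    · linarith
    · linarith
  · have hS : ∀ w ∈ Metric.closedBall z (1/4), -1 ≤ w.re ∧ |w.im| ≤ 5 ∧ z.re - 1/4 ≤ w.re := by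
      intro w hw
      rw [mem_closedBall_iff_norm] at hw
      have h1 := (Complex.abs_re_le_norm (w - z)).trans hw
      have h2 := (Complex.abs_im_le_norm (w - z)).trans hw
      rw [Complex.sub_re, abs_le] at h1
      rw [Complex.sub_im, abs_le] at h2
      rw [abs_le] at him ⊢
      refine ⟨?_, ⟨?_, ?_⟩, ?_⟩ <;> linarith [h1.1, h2.1, h2.2, him.1, him.2]
    have key := Complex.norm_deriv_le_of_forall_mem_sphere_norm_le (f := hK) (c := z) (R := 1/4)
      (C := M / (z.re + 1)) (by norm_num) ?_ ?_
    · refine key.trans (le_of_eq ?_); ring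
    · refine (hK_diff.mono ?_).diffContOnCl
      intro w hw
      have := (hS w (Metric.closure_ball_subset_closedBall hw)).2.1
      have := Real.pi_gt_three
      show |w.im| < 2 * π
      linarith
    · intro w hw
      obtain ⟨a, b, c⟩ := hS w (Metric.sphere_subset_closedBall hw)
      refine (hb w a b).trans ?_
      exact div_le_div_of_nonneg_left hM.le (by linarith) (by linarith)

lemma bound_int {α : ℝ} (h0 : 0 < α) (h1 : α < 1) (M : ℝ) :
    IntegrableOn (fun t : ℝ => t ^ (α - 1) * (M / (t + 1/2))) (Ioi 0) := by
  rw [← Ioc_union_Ioi_eq_Ioi zero_le_one]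
  have hm : Measurable (fun t : ℝ => t ^ (α - 1) * (M / (t + 1/2))) := by fun_prop
  refine IntegrableOn.union ?_ ?_
  · have : IntegrableOn (fun t : ℝ => t ^ (α - 1) * (2 * |M|)) (Ioc 0 1) := by
      refine Integrable.mul_const ?_ _
      exact (intervalIntegrable_iff_integrableOn_Ioc_of_le zero_le_one).1
        (intervalIntegral.intervalIntegrable_rpow' (by linarith))
    refine Integrable.mono' this hm.aestronglyMeasurable ?_
    refine (ae_restrict_iff' measurableSet_Ioc).2 (ae_of_all _ fun t ht => ?_)
    have ht0 := ht.1
    rw [norm_mul, norm_div, Real.norm_of_nonneg (by positivity), Real.norm_of_nonneg (r := t + 1/2) (by positivity), Real.norm_eq_abs]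
    gcongr
    rw [div_le_iff₀ (by positivity)]
    nlinarith [abs_nonneg M]
  · have : IntegrableOn (fun t : ℝ => t ^ (α - 2) * (|M|)) (Ioi 1) := by
      refine Integrable.mul_const ?_ _
      exact integrableOn_Ioi_rpow_of_lt (by linarith) one_pos
    refine Integrable.mono' this hm.aestronglyMeasurable ?_
    refine (ae_restrict_iff' measurableSet_Ioi).2 (ae_of_all _ fun t ht => ?_)
    have ht0 : 0 < t := lt_trans one_pos ht
    rw [norm_mul, norm_div, Real.norm_of_nonneg (by positivity), Real.norm_of_nonneg (r := t + 1/2) (by positivity), Real.norm_eq_abs]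
    rw [show α - 1 = α - 2 + 1 by ring, rpow_add_one ht0.ne', mul_assoc]
    gcongr
    rw [mul_div_assoc', div_le_iff₀ (by positivity)]
    nlinarith [abs_nonneg M]

lemma main_int {α x : ℝ} (h0 : 0 < α) (h1 : α < 1) (hx : 0 < x) :
    IntegrableOn (fun t : ℝ => t ^ α / (t ^ 2 + x ^ 2)) (Ioi 0) ∧
    ∫ t in Ioi (0:ℝ), t ^ α / (t ^ 2 + x ^ 2) = x ^ (α - 1) * (π / (2 * sin (π * (1 - α) / 2))) := by
  set μ := (volume : Measure ℝ).restrict (Ioi 0) with hμ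
  set s : ℝ := (α + 1) / 2 with hs
  let f : ℝ → ℝ → ℝ := fun y t => exp (-(x ^ 2 * y)) * (t ^ α * exp (-y * t ^ (2:ℝ)))
  have hfm : Measurable (Function.uncurry f) := by
    simp only [f, Function.uncurry_def]; fun_prop
  have hinner : ∀ y ∈ Ioi (0:ℝ), Integrable (f y) μ := fun y hy =>
    Integrable.const_mul (integrableOn_rpow_mul_exp_neg_mul_rpow (by linarith) two_pos hy) _
  have hinner_val : ∀ y ∈ Ioi (0:ℝ), ∫ t, f y t ∂μ =
      (1 / 2 * Gamma s) * (y ^ ((1 - s) - 1) * exp (-(x ^ 2 * y))) := by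
    intro y hy
    simp only [f]
    rw [integral_const_mul, hμ, integral_rpow_mul_exp_neg_mul_rpow two_pos (by linarith) hy,
      show -(α + 1) / 2 = 1 - s - 1 by rw [hs]; ring]
    ring
  have hx2 : 0 < x ^ 2 := by positivity
  have hs1 : 0 < 1 - s := by rw [hs]; linarith
  have houter : Integrable (fun y => (1 / 2 * Gamma s) * (y ^ ((1 - s) - 1) * exp (-(x ^ 2 * y)))) μ := by
    refine Integrable.const_mul ?_ _
    have := integrableOn_rpow_mul_exp_neg_mul_rpow (s := 1 - s - 1) (by linarith) one_pos hx2
    rw [IntegrableOn, ← hμ] at this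
    simpa [rpow_one, neg_mul] using this
  have hnn : ∀ y, ∀ᵐ t ∂μ, ‖f y t‖ = f y t := fun y => by
    refine (ae_restrict_iff' measurableSet_Ioi).2 (ae_of_all _ fun t ht => ?_)
    have : 0 < t := ht
    exact Real.norm_of_nonneg (by positivity)
  have hprod : Integrable (Function.uncurry f) (μ.prod μ) := by
    refine (integrable_prod_iff hfm.aestronglyMeasurable).2 ⟨?_, ?_⟩
    · exact (ae_restrict_iff' measurableSet_Ioi).2 (ae_of_all _ hinner)
    · refine houter.congr ?_
      refine (ae_restrict_iff' measurableSet_Ioi).2 (ae_of_all _ fun y hy => ?_)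
      simp only [Function.uncurry]
      rw [integral_congr_ae (hnn y), hinner_val y hy]
  have hval : ∀ t ∈ Ioi (0:ℝ), ∫ y, f y t ∂μ = t ^ α / (t ^ 2 + x ^ 2) := by
    intro t ht
    have : ∀ y, f y t = t ^ α * exp (-(t ^ 2 + x ^ 2) * y) := by
      intro y
      simp only [f, rpow_two]
      rw [mul_left_comm, ← Real.exp_add]; ring_nf
    simp_rw [this]
    rw [integral_const_mul, hμ, integral_exp_mul_Ioi (by nlinarith)]
    simp only [mul_zero, Real.exp_zero]
    rw [neg_div_neg_eq]; ring
  have hae : (fun t => ∫ y, f y t ∂μ) =ᵐ[μ] fun t => t ^ α / (t ^ 2 + x ^ 2) :=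
    (ae_restrict_iff' measurableSet_Ioi).2 (ae_of_all _ hval)
  refine ⟨hprod.integral_prod_right.congr hae, ?_⟩
  rw [← integral_congr_ae hae, ← integral_integral_swap hprod,
    integral_congr_ae ((ae_restrict_iff' measurableSet_Ioi).2 (ae_of_all _ hinner_val)),
    integral_const_mul, Real.integral_rpow_mul_exp_neg_mul_Ioi hs1 hx2]
  have hg := Real.Gamma_mul_Gamma_one_sub s
  have hsin : sin (π * s) = sin (π * (1 - α) / 2) := by
    rw [← Real.sin_pi_sub, hs]; ring_nf
  rw [hsin] at hg
  have hp : (1 / x ^ 2) ^ (1 - s) = x ^ (α - 1) := by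
    rw [one_div, ← rpow_two, ← rpow_neg hx.le, ← rpow_mul hx.le, hs]; ring_nf
  rw [hp]
  calc _ = x ^ (α - 1) * ((Gamma s * Gamma (1 - s)) / 2) := by ring
    _ = _ := by rw [hg]; ring

/-- Open complex neighbourhood of `[-π, π]`. -/
def UK : Set ℂ := {w | |w.re| < 4 ∧ |w.im| < 1 / 2}

lemma UK_open : IsOpen UK := by
  have h1 : Continuous fun z : ℂ => |z.im| := by fun_prop
  have h2 : Continuous fun z : ℂ => |z.re| := by fun_prop
  exact (isOpen_lt h2 continuous_const).inter (isOpen_lt h1 continuous_const)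

lemma mem_SK_of_UK {w : ℂ} (hw : w ∈ UK) (t : ℝ) : (t : ℂ) + w * Complex.I ∈ SK := by
  have h : |w.re| < 4 := hw.1
  have := Real.pi_gt_three
  have h2 : |((t : ℂ) + w * Complex.I).im| < 2 * π := by
    simp; linarith
  exact h2

/-- The holomorphic part of the kernel. -/
noncomputable def GK (α : ℝ) (w : ℂ) : ℂ :=
  ∫ t in Ioi (0:ℝ), ((t ^ (α - 1) : ℝ) : ℂ) * hK ((t : ℂ) + w * Complex.I)

lemma FK_meas (α : ℝ) {w : ℂ} (hw : w ∈ UK) :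
    AEStronglyMeasurable (fun t : ℝ => ((t ^ (α - 1) : ℝ) : ℂ) * hK ((t : ℂ) + w * Complex.I))
      (volume.restrict (Ioi 0)) := by
  refine AEStronglyMeasurable.mul ?_ ?_
  · have : Measurable fun t : ℝ => ((t ^ (α - 1) : ℝ) : ℂ) := by fun_prop
    exact this.aestronglyMeasurable
  · have : Continuous fun t : ℝ => hK ((t : ℂ) + w * Complex.I) :=
      hK_diff.continuousOn.comp_continuous (by fun_prop) (fun t => mem_SK_of_UK hw t)
    exact this.aestronglyMeasurable

lemma FK_bounds : ∃ M : ℝ, ∀ w ∈ UK, ∀ α t : ℝ, 0 < t →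
    ‖((t ^ (α - 1) : ℝ) : ℂ) * hK ((t : ℂ) + w * Complex.I)‖ ≤ t ^ (α - 1) * (M / (t + 1/2)) ∧
    ‖((t ^ (α - 1) : ℝ) : ℂ) * (deriv hK ((t : ℂ) + w * Complex.I) * Complex.I)‖
      ≤ t ^ (α - 1) * (M / (t + 1/2)) := by
  obtain ⟨M, hM, hb⟩ := hK_deriv_bound
  refine ⟨M, fun w hw α t ht => ?_⟩
  have h1 : |w.re| < 4 := hw.1
  have h2 := abs_lt.1 (show |w.im| < 1/2 from hw.2)
  have hre : ((t : ℂ) + w * Complex.I).re = t - w.im := by simp; ring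
  have him : ((t : ℂ) + w * Complex.I).im = w.re := by simp
  obtain ⟨b1, b2⟩ := hb ((t : ℂ) + w * Complex.I) (by rw [hre]; linarith) (by rw [him]; exact h1.le)
  have hle : M / (((t : ℂ) + w * Complex.I).re + 1) ≤ M / (t + 1/2) := by
    rw [hre]
    exact div_le_div_of_nonneg_left hM.le (by linarith) (by linarith)
  have hn : ‖((t ^ (α - 1) : ℝ) : ℂ)‖ = t ^ (α - 1) := by
    rw [Complex.norm_real, Real.norm_of_nonneg (by positivity)]
  constructor
  · rw [norm_mul, hn]
    gcongr
    exact b1.trans hle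
  · rw [norm_mul, hn, norm_mul, Complex.norm_I, mul_one]
    gcongr
    exact b2.trans hle

lemma FK_int {α : ℝ} (h0 : 0 < α) (h1 : α < 1) {w : ℂ} (hw : w ∈ UK) :
    IntegrableOn (fun t : ℝ => ((t ^ (α - 1) : ℝ) : ℂ) * hK ((t : ℂ) + w * Complex.I)) (Ioi 0) := by
  obtain ⟨M, hb⟩ := FK_bounds
  refine Integrable.mono' (bound_int h0 h1 M) (FK_meas α hw) ?_
  exact (ae_restrict_iff' measurableSet_Ioi).2 (ae_of_all _ fun t ht => (hb w hw α t ht).1)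

lemma GK_diff {α : ℝ} (h0 : 0 < α) (h1 : α < 1) : DifferentiableOn ℂ (GK α) UK := by
  obtain ⟨M, hb⟩ := FK_bounds
  intro w hw
  have hU : UK ∈ 𝓝 w := UK_open.mem_nhds hw
  have key := hasDerivAt_integral_of_dominated_loc_of_deriv_le (𝕜 := ℂ)
    (μ := volume.restrict (Ioi (0:ℝ))) (x₀ := w) (s := UK)
    (F := fun w t => ((t ^ (α - 1) : ℝ) : ℂ) * hK ((t : ℂ) + w * Complex.I))
    (F' := fun w t => ((t ^ (α - 1) : ℝ) : ℂ) * (deriv hK ((t : ℂ) + w * Complex.I) * Complex.I))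
    (bound := fun t => t ^ (α - 1) * (M / (t + 1/2))) hU
    (by filter_upwards [hU] with v hv using FK_meas α hv) (FK_int h0 h1 hw) ?_ ?_
    (bound_int h0 h1 M) ?_
  · exact key.2.differentiableAt.differentiableWithinAt
  · have hm : Measurable (deriv hK) := measurable_deriv hK
    have : Measurable fun t : ℝ =>
        ((t ^ (α - 1) : ℝ) : ℂ) * (deriv hK ((t : ℂ) + w * Complex.I) * Complex.I) := by fun_prop
    exact this.aestronglyMeasurable
  · exact (ae_restrict_iff' measurableSet_Ioi).2
      (ae_of_all _ fun t ht v hv => (hb v hv α t ht).2)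
  · refine ae_of_all _ fun t v hv => ?_
    have hd : HasDerivAt hK (deriv hK ((t : ℂ) + v * Complex.I)) ((t : ℂ) + v * Complex.I) :=
      (hK_diff.differentiableAt (SK_open.mem_nhds (mem_SK_of_UK hv t))).hasDerivAt
    have hl : HasDerivAt (fun v : ℂ => (t : ℂ) + v * Complex.I) Complex.I v := by
      simpa using ((hasDerivAt_id v).mul_const Complex.I).const_add (t : ℂ)
    exact (hd.comp v hl).const_mul _

lemma ofReal_mem_UK {x : ℝ} (hx : |x| < 4) : (x : ℂ) ∈ UK := by
  refine ⟨by simpa using hx, by simp⟩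

lemma integrand_eq {α x t : ℝ} (hx : |x| < 4) (ht : 0 < t) :
    t ^ (α - 1) * (Real.exp t * Real.cos x - 1) /
        (1 - 2 * Real.exp t * Real.cos x + Real.exp (2 * t)) =
      t ^ α / (t ^ 2 + |x| ^ 2) +
        (((t ^ (α - 1) : ℝ) : ℂ) * hK ((t : ℂ) + x * Complex.I)).re := by
  have hz0 : (t : ℂ) + x * Complex.I ≠ 0 := by
    intro h
    have := congrArg Complex.re h
    simp at this
    linarith
  rw [hK_eq (mem_SK_of_UK (ofReal_mem_UK hx) t) hz0, Complex.re_ofReal_mul, Complex.sub_re,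
    one_div, one_div, Complex.inv_re, Complex.inv_re, Complex.normSq_apply, Complex.normSq_apply]
  have e1 : (Complex.exp ((t : ℂ) + x * Complex.I) - 1).re = Real.exp t * Real.cos x - 1 := by
    simp [Complex.exp_re]
  have e2 : (Complex.exp ((t : ℂ) + x * Complex.I) - 1).im = Real.exp t * Real.sin x := by
    simp [Complex.exp_im]
  have e3 : ((t : ℂ) + x * Complex.I).re = t := by simp
  have e4 : ((t : ℂ) + x * Complex.I).im = x := by simp
  rw [e1, e2, e3, e4, sq_abs]
  have e5 : (Real.exp t * Real.cos x - 1) * (Real.exp t * Real.cos x - 1) +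
      Real.exp t * Real.sin x * (Real.exp t * Real.sin x) =
      1 - 2 * Real.exp t * Real.cos x + Real.exp (2 * t) := by
    rw [show 2 * t = t + t by ring, Real.exp_add]
    linear_combination (Real.exp t) ^ 2 * Real.sin_sq_add_cos_sq x
  rw [e5, show t ^ α = t ^ (α - 1) * t by rw [← rpow_add_one ht.ne']; ring_nf]
  ring

lemma Kker_eq {α x : ℝ} (h0 : 0 < α) (h1 : α < 1) (hx : x ∈ Ioo (-π) π) (hx0 : x ≠ 0) :
    Kker α x = (1 / (2 * Real.Gamma α * Real.sin (π * (1 - α) / 2))) * |x| ^ (α - 1) +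
      (1 / (π * Real.Gamma α)) * (GK α x).re := by
  have hπ := Real.pi_pos
  have hx4 : |x| < 4 := lt_trans (abs_lt.2 hx) Real.pi_lt_four
  have hne : ¬ ∃ k : ℤ, x = 2 * π * k := by
    rintro ⟨k, hk⟩
    have h2 : |(k:ℝ)| < 1 := by
      have := abs_lt.2 hx
      rw [hk, abs_mul, abs_of_pos (by positivity : 0 < 2 * π)] at this
      nlinarith [abs_nonneg (k:ℝ)]
    have h3 : k = 0 := by
      have : |k| < 1 := by exact_mod_cast h2
      exact Int.abs_lt_one_iff.1 this
    exact hx0 (by rw [hk, h3]; simp)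
  obtain ⟨hi, hv⟩ := main_int h0 h1 (abs_pos.2 hx0)
  have hF := FK_int h0 h1 (ofReal_mem_UK hx4)
  have hF' : IntegrableOn
      (fun t : ℝ => (((t ^ (α - 1) : ℝ) : ℂ) * hK ((t : ℂ) + x * Complex.I)).re) (Ioi 0) := hF.re
  rw [Kker, if_neg hne, setIntegral_congr_fun measurableSet_Ioi
    (fun t ht => integrand_eq (α := α) hx4 ht), integral_add hi hF', hv]
  have hre : ∫ t in Ioi (0:ℝ), (((t ^ (α - 1) : ℝ) : ℂ) * hK ((t : ℂ) + x * Complex.I)).re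
      = (GK α x).re := integral_re hF
  have hG : Real.Gamma α ≠ 0 := (Real.Gamma_pos_of_pos h0).ne'
  have hs : Real.sin (π * (1 - α) / 2) ≠ 0 :=
    (Real.sin_pos_of_pos_of_lt_pi (by nlinarith) (by nlinarith)).ne'
  rw [hre]
  rw [mul_add]
  congr 1
  field_simp

lemma Kker_even (α x : ℝ) : Kker α (-x) = Kker α x := by
  have : (∃ k : ℤ, -x = 2 * π * k) ↔ ∃ k : ℤ, x = 2 * π * k := by
    constructor
    · rintro ⟨k, hk⟩; exact ⟨-k, by push_cast; linarith⟩
    · rintro ⟨k, hk⟩; exact ⟨-k, by push_cast; linarith⟩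
  by_cases h : ∃ k : ℤ, x = 2 * π * k
  · rw [Kker, Kker, if_pos h, if_pos (this.2 h)]
  · rw [Kker, Kker, if_neg h, if_neg (mt this.1 h), Real.cos_neg]

lemma abs_rpow_int {α : ℝ} (h0 : 0 < α) :
    IntegrableOn (fun x : ℝ => |x| ^ (α - 1)) (Ioo (-π) π) := by
  have hp := Real.pi_pos
  have h1 : IntervalIntegrable (fun x : ℝ => |x| ^ (α - 1)) volume 0 π := by
    refine (intervalIntegral.intervalIntegrable_rpow' (r := α - 1) (by linarith)).congr ?_
    intro x hx
    rw [uIoc_of_le hp.le] at hx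
    simp [abs_of_pos hx.1]
  have h2 : IntervalIntegrable (fun x : ℝ => |x| ^ (α - 1)) volume (-π) 0 := by
    have := h1.symm
    rw [IntervalIntegrable.iff_comp_neg] at this
    simpa using this
  exact ((intervalIntegrable_iff_integrableOn_Ioc_of_le (by linarith)).1 (h2.trans h1)).mono_set
    Ioo_subset_Ioc_self

/-- For `α ∈ (0,1)`, `K_α` is integrable on `(−π, π)` and equals
`γ_α·|x|^(α−1)` plus an even smooth function there, where
`γ_α = 1/(2 Γ(α) sin(π(1−α)/2))`. -/
theorem statement4 (α : ℝ) (hα : α ∈ Set.Ioo (0:ℝ) 1) :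
    MeasureTheory.IntegrableOn (Kker α) (Set.Ioo (-π) π) ∧
    ∃ g : ℝ → ℝ,
      (∀ x ∈ Set.Ioo (-π) π, g (-x) = g x) ∧
      ContDiffOn ℝ (⊤ : ℕ∞) g (Set.Ioo (-π) π) ∧
      ∀ x ∈ Set.Ioo (-π) π, x ≠ 0 →
        Kker α x =
          (1 / (2 * Real.Gamma α * Real.sin (π * (1 - α) / 2))) * |x| ^ (α - 1) + g x := by
  obtain ⟨h0, h1⟩ := hα
  have hp4 := Real.pi_lt_four
  set g : ℝ → ℝ := fun x => (1 / (π * Real.Gamma α)) * (GK α x).re with hg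
  have hsm : ContDiffOn ℝ (⊤ : ℕ∞) g (Ioo (-4) 4) := by
    have hc : ContDiffOn ℝ (⊤ : ℕ∞) (GK α) UK :=
      ((GK_diff h0 h1).contDiffOn UK_open).restrict_scalars ℝ
    have hc2 : ContDiffOn ℝ (⊤ : ℕ∞) (fun x : ℝ => GK α x) (Ioo (-4) 4) :=
      hc.comp Complex.ofRealCLM.contDiff.contDiffOn fun x hx => ofReal_mem_UK (abs_lt.2 hx)
    exact contDiffOn_const.mul (Complex.reCLM.contDiff.comp_contDiffOn hc2)
  have heq : ∀ x ∈ Set.Ioo (-π) π, x ≠ 0 → Kker α x =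
      (1 / (2 * Real.Gamma α * Real.sin (π * (1 - α) / 2))) * |x| ^ (α - 1) + g x :=
    fun x hx hx0 => Kker_eq h0 h1 hx hx0
  refine ⟨?_, g, ?_, hsm.mono (Ioo_subset_Ioo (by linarith) (by linarith)), heq⟩
  · have hgi : IntegrableOn g (Ioo (-π) π) :=
      ((hsm.continuousOn.mono (Icc_subset_Ioo (by linarith) (by linarith))).integrableOn_Icc).mono_set
        Ioo_subset_Icc_self
    refine (((abs_rpow_int h0).const_mul
      (1 / (2 * Real.Gamma α * Real.sin (π * (1 - α) / 2)))).add hgi).congr ?_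
    have hne : ∀ᵐ x : ℝ ∂(volume.restrict (Ioo (-π) π)), x ≠ 0 :=
      ae_restrict_of_ae (Measure.ae_ne volume 0)
    filter_upwards [hne, ae_restrict_mem measurableSet_Ioo] with x hx0 hx
    exact (heq x hx hx0).symm
  · intro x hx
    by_cases hx0 : x = 0
    · simp [hx0]
    · have a := heq x hx hx0
      have b := heq (-x) ⟨by linarith [hx.2], by linarith [hx.1]⟩ (neg_ne_zero.2 hx0)
      rw [Kker_even, abs_neg] at b
      linarith
end

section
/- Let α ∈ (0,1) and let f : ℝ → ℝ be continuous, 2π-periodic, odd, with ∫_{−π}^{π} f(y) dy = 0, and suppose f(y) ≥ 0 for all y ∈ (−π, 0) and f(y₀) > 0 for some y₀ ∈ (−π, 0). Then for every x ∈ (−π, 0), ∫_{−π}^{π} K_α(x − y)·f(y) dy > 0. Moreover, convolution with K_α preserves parity: if f is even then x ↦ ∫_{−π}^{π} K_α(x − y) f(y) dy is even, and if f is odd then it is odd. -/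
open Real MeasureTheory Set Filter Topology

/-- The integrand, as a function of `c = cos x`. -/
noncomputable def Fint (α c t : ℝ) : ℝ :=
  t ^ (α - 1) * (Real.exp t * c - 1) / (1 - 2 * Real.exp t * c + Real.exp (2 * t))

lemma den_ge (c t : ℝ) (hc : c < 1) (ht : 0 < t) :
    2 * (1 - c) ≤ 1 - 2 * Real.exp t * c + Real.exp (2 * t) ∧
    (t * Real.exp (t / 2)) ^ 2 ≤ 1 - 2 * Real.exp t * c + Real.exp (2 * t) := by
  have h2 : Real.exp (2 * t) = Real.exp t ^ 2 := by
    rw [← Real.exp_nat_mul]; norm_num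
  have h1 : 1 < Real.exp t := Real.one_lt_exp_iff.2 ht
  have h3 : t * Real.exp (t / 2) ≤ Real.exp t - 1 := by
    have h := Real.self_le_sinh_iff.2 (by linarith : (0:ℝ) ≤ t / 2)
    rw [Real.sinh_eq] at h
    have e1 : Real.exp t = Real.exp (t / 2) * Real.exp (t / 2) := by
      rw [← Real.exp_add]; congr 1; ring
    have e2 : Real.exp (-(t / 2)) * Real.exp (t / 2) = 1 := by
      rw [← Real.exp_add]; simp
    have h5 : t ≤ Real.exp (t / 2) - Real.exp (-(t / 2)) := by linarith
    have := mul_le_mul_of_nonneg_right h5 (Real.exp_pos (t / 2)).le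
    nlinarith
  have h4 : 0 ≤ t * Real.exp (t / 2) := by positivity
  rw [h2]
  constructor
  · nlinarith [sq_nonneg (Real.exp t - 1)]
  · have : (t * Real.exp (t / 2)) ^ 2 ≤ (Real.exp t - 1) ^ 2 := by gcongr
    nlinarith

lemma F_bound (α c t : ℝ) (hα : α ∈ Set.Ioo (0:ℝ) 1) (hc' : -1 ≤ c) (hc : c < 1) (ht : 0 < t) :
    |Fint α c t| ≤ (t ^ (α / 2 - 1) * Real.exp (-(α / 4) * t)) *
      (2 * (1 - c)) ^ (-((1 - α / 2) / 2)) := by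
  obtain ⟨hB, hA⟩ := den_ge c t hc ht
  have hBp : 0 < 2 * (1 - c) := by linarith
  have hD : 0 < 1 - 2 * Real.exp t * c + Real.exp (2 * t) := lt_of_lt_of_le hBp hB
  have hnum : (Real.exp t * c - 1) ^ 2 ≤ 1 - 2 * Real.exp t * c + Real.exp (2 * t) := by
    have h2 : Real.exp (2 * t) = Real.exp t ^ 2 := by
      rw [← Real.exp_nat_mul]; norm_num
    rw [h2]
    have : c ^ 2 ≤ 1 := by nlinarith
    nlinarith [sq_nonneg (Real.exp t)]
  unfold Fint
  set D := 1 - 2 * Real.exp t * c + Real.exp (2 * t) with hDdef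
  have hAp : 0 < t * Real.exp (t / 2) := by positivity
  have k1 : |Real.exp t * c - 1| ≤ D ^ (1 / 2 : ℝ) := by
    rw [← Real.sqrt_eq_rpow]
    exact Real.abs_le_sqrt hnum
  have k2 : D ^ (-(1 / 2) : ℝ) = D ^ (-(α / 4)) * D ^ (-((1 - α / 2) / 2)) := by
    rw [← Real.rpow_add hD]; congr 1; ring
  have k3 : D ^ (-((1 - α / 2) / 2)) ≤ (2 * (1 - c)) ^ (-((1 - α / 2) / 2)) :=
    Real.rpow_le_rpow_of_nonpos hBp hB (by linarith [hα.2])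
  have k4 : D ^ (-(α / 4)) ≤ t ^ (-(α / 2)) * Real.exp (-(α / 4) * t) := by
    have := Real.rpow_le_rpow_of_nonpos (pow_pos hAp 2) hA
      (by linarith [hα.1] : -(α / 4) ≤ 0)
    refine this.trans (le_of_eq ?_)
    rw [← Real.rpow_natCast, ← Real.rpow_mul hAp.le, Real.mul_rpow ht.le (Real.exp_pos _).le,
      ← Real.exp_mul]
    congr 1
    · congr 1; push_cast; ring
    · congr 1; push_cast; ring
  have k5 : |Real.exp t * c - 1| / D ≤ D ^ (-(1 / 2) : ℝ) := by
    rw [div_le_iff₀ hD]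
    refine k1.trans (le_of_eq ?_)
    nth_rewrite 3 [← Real.rpow_one D]
    rw [← Real.rpow_add hD]; norm_num
  have k6 : t ^ (α / 2 - 1) = t ^ (α - 1) * t ^ (-(α / 2)) := by
    rw [← Real.rpow_add ht]; congr 1; ring
  have htp : 0 < t ^ (α - 1) := Real.rpow_pos_of_pos ht _
  rw [abs_div, abs_mul, abs_of_pos hD, abs_of_pos htp, mul_div_assoc, k6]
  calc t ^ (α - 1) * (|Real.exp t * c - 1| / D)
      ≤ t ^ (α - 1) * (D ^ (-(α / 4)) * D ^ (-((1 - α / 2) / 2))) := by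
        rw [← k2]; gcongr
    _ ≤ t ^ (α - 1) * ((t ^ (-(α / 2)) * Real.exp (-(α / 4) * t)) *
          (2 * (1 - c)) ^ (-((1 - α / 2) / 2))) := by
        gcongr
    _ = _ := by ring

lemma dom_integrable (α : ℝ) (hα : α ∈ Set.Ioo (0:ℝ) 1) :
    IntegrableOn (fun t : ℝ => t ^ (α / 2 - 1) * Real.exp (-(α / 4) * t)) (Ioi 0) := by
  have := integrableOn_rpow_mul_exp_neg_mul_rpow (p := 1) (s := α / 2 - 1) (b := α / 4)
    (by linarith [hα.1]) one_pos (by linarith [hα.1])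
  simpa using this

lemma F_integrable (α c : ℝ) (hα : α ∈ Set.Ioo (0:ℝ) 1) (hc' : -1 ≤ c) (hc : c < 1) :
    IntegrableOn (Fint α c) (Ioi 0) := by
  refine Integrable.mono' ((dom_integrable α hα).mul_const
    ((2 * (1 - c)) ^ (-((1 - α / 2) / 2)))) ?_ ?_
  · apply Measurable.aestronglyMeasurable
    unfold Fint
    fun_prop
  · filter_upwards [ae_restrict_mem measurableSet_Ioi] with t ht
    exact F_bound α c t hα hc' hc ht

lemma F_lt (α c d t : ℝ) (hcd : c < d) (hd : d < 1) (ht : 0 < t) :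
    Fint α c t < Fint α d t := by
  have h1 := (den_ge c t (hcd.trans hd) ht).1
  have h2 := (den_ge d t hd ht).1
  have h3 : Real.exp (2 * t) = Real.exp t ^ 2 := by
    rw [← Real.exp_nat_mul]; norm_num
  have h4 : 1 < Real.exp t := Real.one_lt_exp_iff.2 ht
  have htp : 0 < t ^ (α - 1) := Real.rpow_pos_of_pos ht _
  unfold Fint
  rw [mul_div_assoc, mul_div_assoc]
  apply mul_lt_mul_of_pos_left _ htp
  rw [div_lt_div_iff₀ (by linarith) (by linarith), h3]
  set r := Real.exp t
  have : 0 < r * (r ^ 2 - 1) * (d - c) := by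
    apply mul_pos (mul_pos (by linarith) (by nlinarith)) (by linarith)
  nlinarith

lemma cos_one_iff (x : ℝ) : (∃ k : ℤ, x = 2 * π * k) ↔ Real.cos x = 1 := by
  rw [Real.cos_eq_one_iff]
  constructor
  · rintro ⟨k, rfl⟩; exact ⟨k, by ring⟩
  · rintro ⟨k, rfl⟩; exact ⟨k, by ring⟩

lemma Kker_eq_s7 (α x : ℝ) : Kker α x = if Real.cos x = 1 then 0 else
    (1 / (π * Real.Gamma α)) * ∫ t in Set.Ioi (0:ℝ), Fint α (Real.cos x) t := by
  unfold Kker Fint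
  by_cases h : Real.cos x = 1
  · rw [if_pos h, if_pos ((cos_one_iff x).2 h)]
  · rw [if_neg h, if_neg (fun h' => h ((cos_one_iff x).1 h'))]

lemma Kker_measurable (α : ℝ) : Measurable (Kker α) := by
  have : Kker α = fun x => if Real.cos x = 1 then 0 else
    (1 / (π * Real.Gamma α)) * ∫ t in Set.Ioi (0:ℝ), Fint α (Real.cos x) t :=
    funext (Kker_eq_s7 α)
  rw [this]
  refine Measurable.ite (measurableSet_eq_fun Real.measurable_cos measurable_const)
    measurable_const (Measurable.const_mul ?_ _)
  apply StronglyMeasurable.measurable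
  apply StronglyMeasurable.integral_prod_right (f := fun x t => Fint α (Real.cos x) t)
  apply Measurable.stronglyMeasurable
  unfold Fint Function.uncurry
  fun_prop

lemma const_pos (α : ℝ) (hα : α ∈ Set.Ioo (0:ℝ) 1) : 0 < 1 / (π * Real.Gamma α) := by
  have := Real.Gamma_pos_of_pos hα.1
  have := Real.pi_pos
  positivity

lemma Kker_lt (α u v : ℝ) (hα : α ∈ Set.Ioo (0:ℝ) 1) (huv : Real.cos v < Real.cos u)
    (hu : Real.cos u < 1) : Kker α v < Kker α u := by
  rw [Kker_eq_s7, Kker_eq_s7, if_neg hu.ne, if_neg (huv.trans hu).ne]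
  apply mul_lt_mul_of_pos_left _ (const_pos α hα)
  have iu := F_integrable α _ hα (Real.neg_one_le_cos u) hu
  have iv := F_integrable α _ hα (Real.neg_one_le_cos v) (huv.trans hu)
  rw [← sub_pos, ← integral_sub iu iv]
  refine (setIntegral_pos_iff_support_of_nonneg_ae
    (f := fun t => Fint α (Real.cos u) t - Fint α (Real.cos v) t) ?_ (iu.sub iv)).2 ?_
  rotate_left
  · have : Ioi (0:ℝ) ⊆ Function.support
        (fun t => Fint α (Real.cos u) t - Fint α (Real.cos v) t) := by
      intro t ht
      exact (sub_pos.2 (F_lt α _ _ t huv hu ht)).ne'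
    rw [inter_eq_self_of_subset_right this]
    simp
  · filter_upwards [ae_restrict_mem measurableSet_Ioi] with t ht
    exact (sub_pos.2 (F_lt α _ _ t huv hu ht)).le

lemma Kker_bound (α : ℝ) (hα : α ∈ Set.Ioo (0:ℝ) 1) : ∃ C : ℝ, 0 ≤ C ∧ ∀ u,
    |Kker α u| ≤ C * (2 * (1 - Real.cos u)) ^ (-((1 - α / 2) / 2)) := by
  have hI : 0 ≤ ∫ t in Ioi (0:ℝ), t ^ (α / 2 - 1) * Real.exp (-(α / 4) * t) := by
    apply setIntegral_nonneg measurableSet_Ioi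
    intro t ht
    have := Real.rpow_nonneg (le_of_lt ht) (α / 2 - 1)
    positivity
  have hc := const_pos α hα
  refine ⟨1 / (π * Real.Gamma α) *
    ∫ t in Ioi (0:ℝ), t ^ (α / 2 - 1) * Real.exp (-(α / 4) * t), by positivity, ?_⟩
  intro u
  have hr : 0 ≤ (2 * (1 - Real.cos u)) ^ (-((1 - α / 2) / 2)) :=
    Real.rpow_nonneg (by linarith [Real.cos_le_one u]) _
  rw [Kker_eq_s7]
  split_ifs with h
  · simp only [abs_zero]; positivity
  · have hu : Real.cos u < 1 := lt_of_le_of_ne (Real.cos_le_one u) h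
    rw [abs_mul, abs_of_pos hc, mul_assoc]
    apply mul_le_mul_of_nonneg_left _ hc.le
    rw [← integral_mul_const]
    rw [← Real.norm_eq_abs]
    apply norm_integral_le_of_norm_le ((dom_integrable α hα).mul_const _)
    filter_upwards [ae_restrict_mem measurableSet_Ioi] with t ht
    exact F_bound α _ t hα (Real.neg_one_le_cos u) hu ht

lemma rpow_abs_integrable (r a b : ℝ) (hr : -1 < r) :
    IntervalIntegrable (fun x : ℝ => |x| ^ r) volume a b := by
  have key : ∀ c : ℝ, 0 ≤ c → IntervalIntegrable (fun x : ℝ => |x| ^ r) volume 0 c := by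
    intro c hc
    refine (intervalIntegral.intervalIntegrable_rpow' (a := 0) (b := c) hr).congr ?_
    intro x hx
    rw [uIoc_of_le hc] at hx
    simp only [abs_of_pos hx.1]
  have key2 : ∀ c : ℝ, IntervalIntegrable (fun x : ℝ => |x| ^ r) volume 0 c := by
    intro c
    rcases le_total 0 c with h | h
    · exact key c h
    · have := (IntervalIntegrable.iff_comp_neg (by finiteness)).1 (key (-c) (by linarith))
      simpa using this
  exact (key2 a).symm.trans (key2 b)

lemma dom2_integrable (α x : ℝ) (hα : α ∈ Set.Ioo (0:ℝ) 1) (hx : x ∈ Ioo (-π) 0) :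
    IntegrableOn (fun y => (2 * (1 - Real.cos (x - y))) ^ (-((1 - α / 2) / 2))) (Ioo (-π) 0) := by
  have h1 := (rpow_abs_integrable (α / 2 - 1) (x + π) x (by linarith [hα.1])).comp_sub_left x
  simp only [sub_add_cancel_left, sub_self] at h1
  rw [intervalIntegrable_iff_integrableOn_Ioo_of_le (by linarith [Real.pi_pos])] at h1
  refine Integrable.mono' (h1.const_mul ((2 / π) ^ (α / 2 - 1))) ?_ ?_
  · apply Measurable.aestronglyMeasurable
    fun_prop
  · have hne : ∀ᵐ y ∂(volume.restrict (Ioo (-π) 0)), y ≠ x :=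
      ae_restrict_of_ae (Measure.ae_ne volume x)
    filter_upwards [ae_restrict_mem measurableSet_Ioo, hne] with y hy hyx
    have hp := Real.pi_pos
    have habs : |x - y| ≤ π := by
      rw [abs_le]; constructor <;> linarith [hx.1, hx.2, hy.1, hy.2]
    have h2 := Real.cos_le_one_sub_mul_cos_sq habs
    have hpos : 0 < 2 / π * |x - y| := by
      have : 0 < |x - y| := abs_pos.2 (sub_ne_zero.2 (Ne.symm hyx))
      positivity
    have h3 : (2 / π * |x - y|) ^ 2 ≤ 2 * (1 - Real.cos (x - y)) := by
      rw [mul_pow, sq_abs, div_pow]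
      have : 2 ^ 2 / π ^ 2 * (x - y) ^ 2 = 2 * (2 / π ^ 2 * (x - y) ^ 2) := by ring
      linarith
    have h4 := Real.rpow_le_rpow_of_nonpos (pow_pos hpos 2) h3
      (by linarith [hα.2] : -((1 - α / 2) / 2) ≤ 0)
    rw [Real.norm_of_nonneg (Real.rpow_nonneg (le_trans (by positivity) h3) _)]
    refine h4.trans (le_of_eq ?_)
    rw [← Real.rpow_natCast, ← Real.rpow_mul hpos.le, ← Real.mul_rpow (by positivity) (abs_nonneg _)]
    congr 1; push_cast; ring

lemma cos_lt_aux (x y : ℝ) (hx : x ∈ Ioo (-π) 0) (hy : y ∈ Ioo (-π) 0) :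
    Real.cos (x + y) < Real.cos (x - y) := by
  rw [Real.cos_add, Real.cos_sub]
  have h1 := Real.sin_neg_of_neg_of_neg_pi_lt hx.2 hx.1
  have h2 := Real.sin_neg_of_neg_of_neg_pi_lt hy.2 hy.1
  nlinarith [mul_pos_of_neg_of_neg h1 h2]

lemma cos_lt_aux2 (x y : ℝ) (hx : x ∈ Ioo (-π) 0) (hy : y ∈ Ioo (-π) 0) (hne : y ≠ x) :
    Real.cos (x - y) < 1 := by
  refine lt_of_le_of_ne (Real.cos_le_one _) fun h => ?_
  have := (Real.cos_eq_one_iff_of_lt_of_lt (by linarith [hx.1, hy.2, hy.1, hx.2, Real.pi_pos])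
    (by linarith [hx.1, hy.2, hy.1, hx.2, Real.pi_pos])).1 h
  exact hne (by linarith)

lemma conv_integrable (α x : ℝ) (hα : α ∈ Set.Ioo (0:ℝ) 1) (hx : x ∈ Ioo (-π) 0) (f : ℝ → ℝ)
    (hf : Continuous f) :
    IntegrableOn (fun y => Kker α (x - y) * f y) (Ioo (-π) 0) ∧
    IntegrableOn (fun y => Kker α (x + y) * f y) (Ioo (-π) 0) := by
  obtain ⟨C, hC, hK⟩ := Kker_bound α hα
  obtain ⟨M, hM⟩ := (isCompact_Icc (a := -π) (b := 0)).exists_bound_of_continuousOn hf.continuousOn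
  have hm := Kker_measurable α
  have hfm := hf.measurable
  have hd := ((dom2_integrable α x hα hx).const_mul C).mul_const M
  have hne : ∀ᵐ y ∂(volume.restrict (Ioo (-π) 0)), y ≠ x :=
    ae_restrict_of_ae (Measure.ae_ne volume x)
  constructor
  · refine Integrable.mono' hd (by apply Measurable.aestronglyMeasurable; fun_prop) ?_
    filter_upwards [ae_restrict_mem measurableSet_Ioo, hne] with y hy hyx
    rw [norm_mul]
    exact mul_le_mul (hK _) (hM y ⟨hy.1.le, hy.2.le⟩) (norm_nonneg _)
      ((abs_nonneg _).trans (hK _))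
  · refine Integrable.mono' hd (by apply Measurable.aestronglyMeasurable; fun_prop) ?_
    filter_upwards [ae_restrict_mem measurableSet_Ioo, hne] with y hy hyx
    rw [norm_mul]
    have h1 : |Kker α (x + y)| ≤ C * (2 * (1 - Real.cos (x - y))) ^ (-((1 - α / 2) / 2)) := by
      refine (hK _).trans (mul_le_mul_of_nonneg_left ?_ hC)
      apply Real.rpow_le_rpow_of_nonpos
      · linarith [cos_lt_aux2 x y hx hy hyx]
      · linarith [cos_lt_aux x y hx hy]
      · linarith [hα.2]
    exact mul_le_mul h1 (hM y ⟨hy.1.le, hy.2.le⟩) (norm_nonneg _)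
      ((abs_nonneg _).trans h1)

/-- Convolution with `K_α` is strictly positive on `(−π,0)` when
applied to an odd, zero-mean, continuous periodic `f` that is nonnegative on `(−π,0)`
and positive somewhere there; moreover, convolution with `K_α` preserves parity. -/
theorem statement7 (α : ℝ) (hα : α ∈ Set.Ioo (0:ℝ) 1) (f : ℝ → ℝ)
    (hf : Continuous f) (hper : Function.Periodic f (2 * π))
    (hodd : ∀ y, f (-y) = -f y) (hint : (∫ y in (-π)..π, f y) = 0)
    (hnonneg : ∀ y ∈ Set.Ioo (-π) 0, 0 ≤ f y)
    (hpos : ∃ y₀ ∈ Set.Ioo (-π) 0, 0 < f y₀) :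
    (∀ x ∈ Set.Ioo (-π) 0, 0 < ∫ y in (-π)..π, Kker α (x - y) * f y) ∧
    (∀ g : ℝ → ℝ, Continuous g → Function.Periodic g (2 * π) →
      ((∀ y, g (-y) = g y) →
        ∀ x : ℝ, (∫ y in (-π)..π, Kker α (-x - y) * g y)
          = ∫ y in (-π)..π, Kker α (x - y) * g y) ∧
      ((∀ y, g (-y) = -g y) →
        ∀ x : ℝ, (∫ y in (-π)..π, Kker α (-x - y) * g y)
          = -∫ y in (-π)..π, Kker α (x - y) * g y)) := by
  constructor
  · intro x hx
    have hp := Real.pi_pos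
    obtain ⟨i1, i2⟩ := conv_integrable α x hα hx f hf
    have j1 : IntervalIntegrable (fun y => Kker α (x - y) * f y) volume (-π) 0 :=
      (intervalIntegrable_iff_integrableOn_Ioo_of_le (by linarith)).2 i1
    have j2 : IntervalIntegrable (fun y => Kker α (x + y) * f y) volume (-π) 0 :=
      (intervalIntegrable_iff_integrableOn_Ioo_of_le (by linarith)).2 i2
    have j3 : IntervalIntegrable (fun y => Kker α (x - y) * f y) volume 0 π := by
      have := ((IntervalIntegrable.iff_comp_neg (by finiteness)).1 j2).symm.neg
      simp only [neg_neg, neg_zero] at this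
      refine this.congr ?_
      intro y _
      simp only [Pi.neg_apply, hodd, sub_eq_add_neg]
      ring
    have e3 : ∫ y in (0:ℝ)..π, Kker α (x - y) * f y =
        - ∫ y in (-π)..0, Kker α (x + y) * f y := by
      have h := intervalIntegral.integral_comp_neg (a := -π) (b := 0)
        (fun y => Kker α (x - y) * f y)
      simp only [neg_neg, neg_zero] at h
      rw [← h, ← intervalIntegral.integral_neg]
      congr 1; ext y
      rw [hodd, sub_neg_eq_add]; ring
    rw [← intervalIntegral.integral_add_adjacent_intervals j1 j3, e3, ← sub_eq_add_neg,
      ← intervalIntegral.integral_sub j1 j2,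
      intervalIntegral.integral_of_le (by linarith), integral_Ioc_eq_integral_Ioo]
    refine (setIntegral_pos_iff_support_of_nonneg_ae
      (f := fun y => Kker α (x - y) * f y - Kker α (x + y) * f y) ?_ (i1.sub i2)).2 ?_
    rotate_left
    · obtain ⟨y₀, hy₀, hfy⟩ := hpos
      have hU : IsOpen ({y | 0 < f y} ∩ Ioo (-π) 0) :=
        (isOpen_lt continuous_const hf).inter isOpen_Ioo
      have hUpos : 0 < volume (({y | 0 < f y} ∩ Ioo (-π) 0) \ {x}) := by
        rw [measure_diff_null (by simp)]
        exact hU.measure_pos volume ⟨y₀, hfy, hy₀⟩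
      refine hUpos.trans_le (measure_mono ?_)
      rintro y ⟨⟨hy1, hy2⟩, hy3⟩
      refine ⟨?_, hy2⟩
      have hlt := Kker_lt α (x - y) (x + y) hα (cos_lt_aux x y hx hy2)
        (cos_lt_aux2 x y hx hy2 hy3)
      have h5 : 0 < (Kker α (x - y) - Kker α (x + y)) * f y := mul_pos (sub_pos.2 hlt) hy1
      rw [sub_mul] at h5
      exact h5.ne'
    · have hne : ∀ᵐ y ∂(volume.restrict (Ioo (-π) 0)), y ≠ x :=
        ae_restrict_of_ae (Measure.ae_ne volume x)
      filter_upwards [ae_restrict_mem measurableSet_Ioo, hne] with y hy hyx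
      have hlt := Kker_lt α (x - y) (x + y) hα (cos_lt_aux x y hx hy)
        (cos_lt_aux2 x y hx hy hyx)
      have h5 : 0 ≤ (Kker α (x - y) - Kker α (x + y)) * f y :=
        mul_nonneg (sub_pos.2 hlt).le (hnonneg y hy)
      rw [sub_mul] at h5
      exact h5
  · intro g _ _
    have key : ∀ x, (∫ y in (-π)..π, Kker α (-x - y) * g y) =
        ∫ y in (-π)..π, Kker α (x - y) * g (-y) := by
      intro x
      have h := intervalIntegral.integral_comp_neg (a := -π) (b := π)
        (fun y => Kker α (-x - y) * g y)
      simp only [neg_neg] at h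
      rw [← h]
      congr 1; ext y
      rw [← Kker_even α (x - y)]
      congr 2; ring
    constructor
    · intro hg x
      rw [key]; simp only [hg]
    · intro hg x
      rw [key, ← intervalIntegral.integral_neg]; simp only [hg, mul_neg]
end
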